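/- Let G ⊆ 𝕋 be a transversal of Q₁₀ and let x ∈ 𝕋 with x ∉ G. Then the set {q ∈ Q₁₀ : q ≠ 0 and x + q ∈ G} has exactly one element, while the set {q ∈ Q₁₀ : q ≠ 0 and x + 10·q ∈ G} has exactly ten elements. (Thus the bettor who, for every nonzero q ∈ Q₁₀, stakes on the event x + 10·q ∈ G against the event x + q ∈ G loses exactly one bet and wins exactly ten.) -/

import Mathlib

/-- `𝕋 = ℝ/ℤ`, the circle group (reals modulo 1). -/
abbrev Circle1 : Type := AddCircle (1 : ℝ)

/-- `Q₁₀`: the subgroup of `𝕋` of elements annihilated by some power of 10. -/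
def Q10 : Set Circle1 := {x | ∃ b : ℕ, ((10 : ℕ) ^ b) • x = 0}

/-- `G` is a transversal of `Q₁₀`: every `x ∈ 𝕋` has a unique `g ∈ G` with `x - g ∈ Q₁₀`. -/
def IsTransversal (G : Set Circle1) : Prop :=
  ∀ x : Circle1, ∃! g : Circle1, g ∈ G ∧ x - g ∈ Q10

theorem torsion_ten_ncard : {t : Circle1 | (10 : ℕ) • t = 0}.ncard = 10 := by
  have h10 : addOrderOf (((1 : ℝ) / (10 : ℕ) : ℝ) : Circle1) = 10 :=
    AddCircle.addOrderOf_period_div (by norm_num)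
  have hp := nsmul_injOn_Iio_addOrderOf (x := (((1 : ℝ) / (10 : ℕ) : ℝ) : Circle1))
  rw [h10] at hp
  have e : {t : Circle1 | (10 : ℕ) • t = 0} =
      (fun k : ℕ => k • (((1 : ℝ) / (10 : ℕ) : ℝ) : Circle1)) '' Set.Iio 10 := by
    ext t
    simp only [Set.mem_setOf_eq, Set.mem_image, Set.mem_Iio]
    constructor
    · intro h
      obtain ⟨m, hm, rfl⟩ := (AddCircle.nsmul_eq_zero_iff (by norm_num)).1 h
      refine ⟨m, hm, ?_⟩
      rw [← AddCircle.coe_nsmul]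
      congr 1
      simp
      ring
    · rintro ⟨k, -, rfl⟩
      rw [smul_comm]
      have := addOrderOf_nsmul_eq_zero (((1 : ℝ) / (10 : ℕ) : ℝ) : Circle1)
      rw [h10] at this
      rw [this, smul_zero]
  rw [e, Set.ncard_image_of_injOn hp]
  simp [Set.ncard_eq_toFinset_card']

theorem Q10_neg {q : Circle1} (h : q ∈ Q10) : -q ∈ Q10 := by
  obtain ⟨b, hb⟩ := h
  exact ⟨b, by rw [smul_neg, hb, neg_zero]⟩

theorem Q10_ten {q : Circle1} : (10 : ℕ) • q ∈ Q10 ↔ q ∈ Q10 := by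
  constructor
  · rintro ⟨b, hb⟩
    exact ⟨b + 1, by rw [pow_succ, mul_smul, hb]⟩
  · rintro ⟨b, hb⟩
    exact ⟨b, by rw [smul_comm, hb, smul_zero]⟩

theorem stmt3 (G : Set Circle1) (hG : IsTransversal G) (x : Circle1) (hx : x ∉ G) :
    {q ∈ Q10 | q ≠ 0 ∧ x + q ∈ G}.ncard = 1 ∧
    {q ∈ Q10 | q ≠ 0 ∧ x + (10 : ℕ) • q ∈ G}.ncard = 10 := by
  obtain ⟨g, ⟨hgG, hgQ⟩, hu⟩ := hG x
  have key : ∀ q : Circle1, (q ∈ Q10 ∧ x + q ∈ G) ↔ q = g - x := by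
    intro q
    constructor
    · rintro ⟨h1, h2⟩
      have := hu (x + q) ⟨h2, by
        have e : x - (x + q) = -q := by abel
        rw [e]; exact Q10_neg h1⟩
      rw [← this]; abel
    · rintro rfl
      refine ⟨?_, by simpa using hgG⟩
      have := Q10_neg hgQ
      rwa [neg_sub] at this
  have hne : g - x ≠ 0 := by
    intro h
    rw [sub_eq_zero] at h
    exact hx (h ▸ hgG)
  constructor
  · rw [Set.ncard_eq_one]
    refine ⟨g - x, ?_⟩
    ext q
    simp only [Set.mem_setOf_eq, Set.mem_singleton_iff]
    constructor
    · rintro ⟨h1, -, h2⟩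
      exact (key q).1 ⟨h1, h2⟩
    · intro h
      obtain ⟨h1, h2⟩ := (key q).2 h
      exact ⟨h1, h ▸ hne, h2⟩
  · obtain ⟨r, hr⟩ : ∃ r : Circle1, (10 : ℕ) • r = g - x := by
      induction g - x using QuotientAddGroup.induction_on with
      | H y =>
        refine ⟨((y / 10 : ℝ) : Circle1), ?_⟩
        rw [← AddCircle.coe_nsmul]
        congr 1
        simp
        ring
    have e : {q ∈ Q10 | q ≠ 0 ∧ x + (10 : ℕ) • q ∈ G} =
        (fun t => r + t) '' {t : Circle1 | (10 : ℕ) • t = 0} := by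
      ext q
      simp only [Set.mem_setOf_eq, Set.mem_image]
      constructor
      · rintro ⟨h1, -, h2⟩
        have := (key _).1 ⟨Q10_ten.2 h1, h2⟩
        exact ⟨q - r, by rw [smul_sub, this, hr, sub_self], by abel⟩
      · rintro ⟨t, ht, rfl⟩
        have h3 : (10 : ℕ) • (r + t) = g - x := by rw [smul_add, hr, ht, add_zero]
        obtain ⟨h1, h2⟩ := (key _).2 h3
        refine ⟨Q10_ten.1 h1, ?_, h2⟩
        intro h0
        rw [h0, smul_zero] at h3
        exact hne h3.symm
    rw [e, Set.ncard_image_of_injective _ (add_right_injective r), torsion_ten_ncard]
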